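/- arXiv:1304.4354 — 2 statements merged into one kernel-verified Lean document; each statement's English description precedes it below -/
import Mathlib

section
/- Let r_0, r_1, ..., r_d be the orthogonal polynomial sequence for the discrete scalar product on a mesh of d+1 real points, normalized so that ‖r_i‖² = r_i(λ_0), and let s_i = r_0 + r_1 + ... + r_i be their sum polynomials. Then 1 = s_0(λ_0) < s_1(λ_0) < ... < s_d(λ_0) = 1/w_0, and s_d(λ_i) = 0 for every i ≠ 0. -/
open Polynomial Finset

/-- The discrete scalar product `⟨f,g⟩ = ∑_{i∈s} w i · f(λ i) · g(λ i)` on a mesh. -/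
def discInner (s : Finset ℕ) (lam w : ℕ → ℝ) (f g : Polynomial ℝ) : ℝ :=
  ∑ i ∈ s, w i * f.eval (lam i) * g.eval (lam i)

/-!
If `⟨r j, r j⟩ = r j (y)` for orthogonal polynomials `r 0, …, r d`, then their sum reproduces
evaluation at `y` against every polynomial of degree at most `d`: it does so against each `r j`,
and these span. Pairing the sum with the Lagrange basis polynomial of the node `x i` gives its value
there, which for `y = x a` is `1 / w a` if `i = a` and `0` otherwise. The values at `y` of the
partial sums increase because each increment `r j (y)` is a square norm.
-/

section BilinForm

variable {R M κ : Type*} [CommSemiring R] [AddCommMonoid M] [Module R M]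

lemma bilin_sum_eq_of_mem_span {B : LinearMap.BilinForm R M} {φ : Module.Dual R M}
    {t : Finset κ} {b : κ → M} (horth : ∀ i ∈ t, ∀ j ∈ t, i ≠ j → B (b i) (b j) = 0)
    (hnorm : ∀ j ∈ t, B (b j) (b j) = φ (b j)) {v : M} (hv : v ∈ Submodule.span R (b '' t)) :
    B (∑ i ∈ t, b i) v = φ v := by
  refine LinearMap.eqOn_span (Set.forall_mem_image.2 fun j hj => ?_) hv
  rw [map_sum, LinearMap.sum_apply, sum_eq_single_of_mem j hj fun i hi => horth i hi j hj,
    hnorm j hj]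

end BilinForm

/-- The discrete form `⟨f, g⟩ = ∑ i ∈ s, w i * f (x i) * g (x i)` as a bilinear form on
polynomials; it extends `discInner` to arbitrary index types and coefficient rings. -/
noncomputable def discForm {ι R : Type*} [CommSemiring R] (s : Finset ι) (x w : ι → R) :
    LinearMap.BilinForm R R[X] :=
  ∑ i ∈ s, w i • (LinearMap.mul R R).compl₁₂ (leval (x i)) (leval (x i))

section DiscForm

variable {ι R : Type*}

lemma discForm_apply [CommSemiring R] (s : Finset ι) (x w : ι → R) (f g : R[X]) :
    discForm s x w f g = ∑ i ∈ s, w i * f.eval (x i) * g.eval (x i) := by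
  simp [discForm, mul_assoc]

lemma discInner_eq_discForm (s : Finset ℕ) (x w : ℕ → ℝ) (f g : ℝ[X]) :
    discInner s x w f g = discForm s x w f g :=
  (discForm_apply s x w f g).symm

lemma discForm_self_pos [CommRing R] [LinearOrder R] [IsStrictOrderedRing R]
    {s : Finset ι} {x w : ι → R} (hx : Set.InjOn x s) (hw : ∀ i ∈ s, 0 < w i)
    {f : R[X]} (hf : f ≠ 0) (hdeg : f.degree < #s) : 0 < discForm s x w f f := by
  obtain ⟨k, hk, hfk⟩ : ∃ k ∈ s, f.eval (x k) ≠ 0 := by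
    by_contra! hzero
    exact hf (eq_zero_of_degree_lt_of_eval_index_eq_zero s hx hdeg hzero)
  simp only [discForm_apply, mul_assoc]
  exact sum_pos' (fun i hi => mul_nonneg (hw i hi).le (mul_self_nonneg _))
    ⟨k, hk, mul_pos (hw k hk) (mul_self_pos.2 hfk)⟩

end DiscForm

section Field

variable {ι K : Type*} [Field K] {s : Finset ι} {x w : ι → K}

lemma span_image_Iio_eq_degreeLT {n : ℕ} {r : ℕ → K[X]} (hdeg : ∀ i < n, (r i).degree = i) :
    Submodule.span K (r '' Set.Iio n) = degreeLT K n := by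
  -- Mathlib's `Polynomial.Sequence` is infinite, so continue `r` with monomials from `n` on.
  let S : Polynomial.Sequence K :=
    { elems' := fun i => if i < n then r i else X ^ i
      degree_eq' := fun i => by
        split_ifs with hi
        · exact hdeg i hi
        · exact degree_X_pow i }
  have hS : S '' Set.Iio n = r '' Set.Iio n := Set.image_congr fun i hi => if_pos hi
  rw [← hS]
  exact S.span_degreeLT fun i _ => (leadingCoeff_ne_zero.2 (S.ne_zero i)).isUnit

lemma discForm_sum_range_eq_eval {n : ℕ} {y : K} {r : ℕ → K[X]}
    (hdeg : ∀ i < n, (r i).degree = i)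
    (horth : ∀ i < n, ∀ j < n, i ≠ j → discForm s x w (r i) (r j) = 0)
    (hnorm : ∀ i < n, discForm s x w (r i) (r i) = (r i).eval y)
    {f : K[X]} (hf : f.degree < n) :
    discForm s x w (∑ i ∈ range n, r i) f = f.eval y := by
  refine bilin_sum_eq_of_mem_span (φ := leval y) ?_ ?_ ?_
  · simpa only [mem_range] using horth
  · simpa only [mem_range, leval_apply] using hnorm
  · rwa [coe_range, span_image_Iio_eq_degreeLT hdeg, mem_degreeLT]

lemma discForm_lagrangeBasis [DecidableEq ι] (hx : Set.InjOn x s) (p : K[X]) {i : ι}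
    (hi : i ∈ s) : discForm s x w p (Lagrange.basis s x i) = w i * p.eval (x i) := by
  rw [discForm_apply, sum_eq_single_of_mem i hi, Lagrange.eval_basis_self hx hi, mul_one]
  intro j hj hji
  rw [Lagrange.eval_basis_of_ne hji.symm hj, mul_zero]

lemma mul_eval_eq_eval_lagrangeBasis [DecidableEq ι] (hx : Set.InjOn x s) {p : K[X]} {y : K}
    (hp : ∀ f : K[X], f.degree < #s → discForm s x w p f = f.eval y) {i : ι} (hi : i ∈ s) :
    w i * p.eval (x i) = (Lagrange.basis s x i).eval y := by
  rw [← discForm_lagrangeBasis hx p hi]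
  refine hp _ ?_
  rw [Lagrange.degree_basis hx hi, Nat.cast_lt]
  exact Nat.sub_lt (card_pos.2 ⟨i, hi⟩) one_pos

lemma eval_eq_one_div_sum_of_degree_eq_zero {f : K[X]} {y : K} (hdeg : f.degree = 0)
    (hnorm : discForm s x w f f = f.eval y) : f.eval y = 1 / ∑ i ∈ s, w i := by
  obtain ⟨c, rfl⟩ : ∃ c, f = C c := ⟨_, eq_C_of_degree_eq_zero hdeg⟩
  have hc : c ≠ 0 := by
    rintro rfl
    simp at hdeg
  simp only [discForm_apply, eval_C, ← sum_mul] at hnorm ⊢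
  rw [one_div]
  exact eq_inv_of_mul_eq_one_right (mul_right_cancel₀ hc (hnorm.trans (one_mul c).symm))

end Field

theorem stmt_2_general {ι K : Type*} [Field K] [LinearOrder K] [IsStrictOrderedRing K]
    {s : Finset ι} {x w : ι → K} (hx : Set.InjOn x s) (hw : ∀ i ∈ s, 0 < w i)
    {d : ℕ} (hcard : #s = d + 1) {a : ι} (ha : a ∈ s) {r : ℕ → K[X]}
    (hdeg : ∀ i ≤ d, (r i).degree = i)
    (horth : ∀ i ≤ d, ∀ j ≤ d, i ≠ j → discForm s x w (r i) (r j) = 0)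
    (hnorm : ∀ i ≤ d, discForm s x w (r i) (r i) = (r i).eval (x a)) :
    (∑ i ∈ range 1, r i).eval (x a) = 1 / ∑ i ∈ s, w i ∧
    (∀ j < d, (∑ i ∈ range (j + 1), r i).eval (x a) < (∑ i ∈ range (j + 2), r i).eval (x a)) ∧
    (∑ i ∈ range (d + 1), r i).eval (x a) = 1 / w a ∧
    ∀ i ∈ s, i ≠ a → (∑ j ∈ range (d + 1), r j).eval (x i) = 0 := by
  classical
  have hpos : ∀ j ≤ d, 0 < (r j).eval (x a) := fun j hj => by
    rw [← hnorm j hj]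
    refine discForm_self_pos hx hw (degree_ne_bot.1 (by simp [hdeg j hj])) ?_
    rwa [hdeg j hj, hcard, Nat.cast_lt, Nat.lt_succ_iff]
  have hvalue : ∀ i ∈ s,
      w i * (∑ j ∈ range (d + 1), r j).eval (x i) = (Lagrange.basis s x i).eval (x a) := by
    refine fun i => mul_eval_eq_eval_lagrangeBasis hx fun f hf => ?_
    rw [hcard] at hf
    simp only [← Nat.lt_add_one_iff] at hdeg horth hnorm
    exact discForm_sum_range_eq_eval hdeg horth hnorm hf
  refine ⟨?_, fun j hj => ?_, ?_, fun i hi hia => ?_⟩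
  · rw [sum_range_one]
    exact eval_eq_one_div_sum_of_degree_eq_zero (hdeg 0 d.zero_le) (hnorm 0 d.zero_le)
  · rw [sum_range_succ _ (j + 1), eval_add]
    exact lt_add_of_pos_right _ (hpos (j + 1) hj)
  · rw [eq_div_iff (hw a ha).ne', mul_comm, hvalue a ha, Lagrange.eval_basis_self hx ha]
  · refine (mul_eq_zero.1 ?_).resolve_left (hw i hi).ne'
    rw [hvalue i hi, Lagrange.eval_basis_of_ne hia ha]

/-- Lemma 1(c): the sum polynomials `s_j = r_0 + ⋯ + r_j` of the orthogonal sequence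
satisfy `1 = s_0(λ_0) < s_1(λ_0) < ⋯ < s_d(λ_0) = 1/w_0` and `s_d(λ_i) = 0` for `i ≠ 0`. -/
theorem stmt_2 (d : ℕ) (lam : ℕ → ℝ) (hlam : StrictAntiOn lam (Set.Iic d))
    (w : ℕ → ℝ) (hw : ∀ i ≤ d, 0 < w i)
    (hwsum : ∑ i ∈ Finset.range (d + 1), w i = 1)
    (r : ℕ → Polynomial ℝ)
    (hdeg : ∀ i ≤ d, (r i).degree = (i : WithBot ℕ))
    (horth : ∀ i ≤ d, ∀ j ≤ d, i ≠ j →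
      discInner (Finset.range (d + 1)) lam w (r i) (r j) = 0)
    (hnorm : ∀ i ≤ d,
      discInner (Finset.range (d + 1)) lam w (r i) (r i) = (r i).eval (lam 0)) :
    (∑ i ∈ Finset.range 1, r i).eval (lam 0) = 1 ∧
    (∀ j, j < d →
      (∑ i ∈ Finset.range (j + 1), r i).eval (lam 0)
        < (∑ i ∈ Finset.range (j + 2), r i).eval (lam 0)) ∧
    (∑ i ∈ Finset.range (d + 1), r i).eval (lam 0) = 1 / w 0 ∧
    (∀ i, 1 ≤ i → i ≤ d → (∑ j ∈ Finset.range (d + 1), r j).eval (lam i) = 0) := by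
  have le_of_mem (i : ℕ) (hi : i ∈ range (d + 1)) : i ≤ d := mem_range_succ_iff.1 hi
  simp only [discInner_eq_discForm] at horth hnorm
  obtain ⟨hzero, hlt, htop, hroot⟩ := stmt_2_general (hlam.injOn.mono le_of_mem)
    (fun i hi => hw i (le_of_mem i hi)) (card_range _) (mem_range.2 d.succ_pos) hdeg horth hnorm
  exact ⟨by rw [hzero, hwsum, one_div_one], hlt, htop,
    fun i hi hid => hroot i (mem_range_succ_iff.2 hid) (Nat.ne_of_gt hi)⟩
end

section
/- Every connected graph Γ that is pseudo-distance-regular around each of its vertices is either distance-regular or distance-biregular. -/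
open Finset Matrix

/-- `Γ_i(u)`: the set of vertices at distance `i` from `u`. -/
noncomputable def sphere {V : Type*} [Fintype V] [DecidableEq V] (G : SimpleGraph V)
    (u : V) (i : ℕ) : Finset V :=
  Finset.univ.filter (fun v => G.dist u v = i)

/-- `Γ` is pseudo-distance-regular around `u` (w.r.t. the positive eigenvector `α`):
for every `i`, the numbers `c_i^*(v)`, `a_i^*(v)`, `b_i^*(v)` do not depend on the
choice of `v ∈ Γ_i(u)`. -/
def IsPDRAround {V : Type*} [Fintype V] [DecidableEq V] (G : SimpleGraph V)
    [DecidableRel G.Adj] (alpha : V → ℝ) (u : V) : Prop :=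
  ∀ i : ℕ, ∀ v v' : V, G.dist u v = i → G.dist u v' = i →
    ((1 / alpha v) * ∑ w ∈ sphere G u (i - 1) ∩ G.neighborFinset v, alpha w
        = (1 / alpha v') * ∑ w ∈ sphere G u (i - 1) ∩ G.neighborFinset v', alpha w) ∧
    ((1 / alpha v) * ∑ w ∈ sphere G u i ∩ G.neighborFinset v, alpha w
        = (1 / alpha v') * ∑ w ∈ sphere G u i ∩ G.neighborFinset v', alpha w) ∧
    ((1 / alpha v) * ∑ w ∈ sphere G u (i + 1) ∩ G.neighborFinset v, alpha w
        = (1 / alpha v') * ∑ w ∈ sphere G u (i + 1) ∩ G.neighborFinset v', alpha w)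

/-- `Γ` is distance-regular: the intersection numbers `c_i(u,v)`, `a_i(u,v)`,
`b_i(u,v)` (for `v ∈ Γ_i(u)`) depend only on `i = dist(u,v)`. -/
def IsDistRegular {V : Type*} [Fintype V] [DecidableEq V] (G : SimpleGraph V)
    [DecidableRel G.Adj] : Prop :=
  ∃ c a b : ℕ → ℕ, ∀ u v : V,
    (sphere G u (G.dist u v - 1) ∩ G.neighborFinset v).card = c (G.dist u v) ∧
    (sphere G u (G.dist u v) ∩ G.neighborFinset v).card = a (G.dist u v) ∧
    (sphere G u (G.dist u v + 1) ∩ G.neighborFinset v).card = b (G.dist u v)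

/-- `Γ` is distance-biregular: it is bipartite with stable sets `V₁, V₂`, it is
distance-regular around each vertex, and the intersection array depends only on the
stable set containing the base vertex. -/
def IsDistBiregular {V : Type*} [Fintype V] [DecidableEq V] (G : SimpleGraph V)
    [DecidableRel G.Adj] : Prop :=
  ∃ V1 V2 : Finset V, V1 ∪ V2 = Finset.univ ∧ Disjoint V1 V2 ∧
    (∀ u ∈ V1, ∀ v ∈ V1, ¬ G.Adj u v) ∧ (∀ u ∈ V2, ∀ v ∈ V2, ¬ G.Adj u v) ∧
    ∃ c1 a1 b1 c2 a2 b2 : ℕ → ℕ,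
      (∀ u ∈ V1, ∀ v : V,
        (sphere G u (G.dist u v - 1) ∩ G.neighborFinset v).card = c1 (G.dist u v) ∧
        (sphere G u (G.dist u v) ∩ G.neighborFinset v).card = a1 (G.dist u v) ∧
        (sphere G u (G.dist u v + 1) ∩ G.neighborFinset v).card = b1 (G.dist u v)) ∧
      (∀ u ∈ V2, ∀ v : V,
        (sphere G u (G.dist u v - 1) ∩ G.neighborFinset v).card = c2 (G.dist u v) ∧
        (sphere G u (G.dist u v) ∩ G.neighborFinset v).card = a2 (G.dist u v) ∧
        (sphere G u (G.dist u v + 1) ∩ G.neighborFinset v).card = b2 (G.dist u v))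

/-!
Neighbours of a common vertex have equal weight, so the weight is constant along walks of even
length. Dividing it out turns pseudo-distance-regularity around a vertex into ordinary
distance-regularity around it, and the theorem becomes that of Godsil and Shawe-Taylor on
distance-regularised graphs.

For the latter, if `w` is adjacent to `u` and `u'`, then a closed walk of length `l + 1` at `u` is
one of `deg u` first steps followed by a walk of length `l`, and regularity around `u` lets all of
them be counted as walks from `w` to `u`; regularity around `w` then gives the same number at `u'`.
Hence vertices joined by an even walk have the same closed walk counts and the same degrees, which
determine the whole intersection array, one distance at a time. A graph in which not all pairs of
vertices are joined by an even walk is bipartite.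
-/

section Sums

variable {ι κ M : Type*} {s : Finset ι} {t : Finset κ} {f : ι → M} {g : κ → M}

lemma sum_eq_sum_of_card_eq [AddCommMonoid M] (hcard : #s = #t)
    (h : ∀ x ∈ s, ∀ y ∈ t, f x = g y) : ∑ x ∈ s, f x = ∑ y ∈ t, g y := by
  rw [← sum_coe_sort s, ← sum_coe_sort t]
  exact Fintype.sum_equiv (equivOfCardEq hcard) _ _ fun x => h x x.2 _ (Subtype.prop _)

lemma card_eq_card_of_sum_eq [AddCommMonoid M] [PartialOrder M] [IsOrderedCancelAddMonoid M]
    (hf : ∀ x ∈ s, 0 < f x) (hg : ∀ y ∈ t, 0 < g y) (h : ∀ x ∈ s, ∀ y ∈ t, f x = g y)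
    (hsum : ∑ x ∈ s, f x = ∑ y ∈ t, g y) : #s = #t := by
  rcases s.eq_empty_or_nonempty with rfl | ⟨x, hx⟩
  · rcases t.eq_empty_or_nonempty with rfl | ht
    · rfl
    · exact absurd hsum (sum_pos hg ht).ne
  rcases t.eq_empty_or_nonempty with rfl | ⟨y, hy⟩
  · exact absurd hsum (sum_pos hf ⟨x, hx⟩).ne'
  rw [sum_eq_card_nsmul fun x' hx' => h x' hx' y hy,
    sum_eq_card_nsmul fun y' hy' => (h x hx y' hy').symm, h x hx y hy] at hsum
  exact (nsmul_left_strictMono (hg y hy)).injective hsum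

end Sums

section Walks

variable {V : Type*} {G : SimpleGraph V} {u u' v v' : V}

/-- Two vertices are even-reachable from each other if some walk of even length, possibly with
repeated vertices, joins them. In a bipartite graph the classes are the stable sets. -/
def EvenReachable (G : SimpleGraph V) (u v : V) : Prop :=
  ∃ p : G.Walk u v, Even p.length

lemma EvenReachable.refl (u : V) : EvenReachable G u u :=
  ⟨.nil, by simp⟩

lemma apply_eq_of_even_length {β : Type*} {f : V → β}
    (hf : ∀ x y z, G.Adj x y → G.Adj x z → f y = f z) {u v : V} :
    ∀ p : G.Walk u v, Even p.length → f u = f v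
  | .nil, _ => rfl
  | .cons _ .nil, hp => by simp at hp
  | .cons h (.cons h' p), hp =>
    (hf _ _ _ h.symm h').trans
      (apply_eq_of_even_length hf p (by simpa [Nat.even_add_one] using hp))

lemma EvenReachable.apply_eq {β : Type*} {f : V → β} (h : EvenReachable G u v)
    (hf : ∀ x y z, G.Adj x y → G.Adj x z → f y = f z) : f u = f v := by
  obtain ⟨p, hp⟩ := h
  exact apply_eq_of_even_length hf p hp

lemma EvenReachable.of_dist_eq (hconn : G.Connected) (h : EvenReachable G u u')
    (hdist : G.dist u v = G.dist u' v') : EvenReachable G v v' := by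
  obtain ⟨p, hp⟩ := h
  obtain ⟨q, hq⟩ := hconn.exists_walk_length_eq_dist u v
  obtain ⟨q', hq'⟩ := hconn.exists_walk_length_eq_dist u' v'
  refine ⟨(q.reverse.append p).append q', ?_⟩
  simp only [SimpleGraph.Walk.length_append, SimpleGraph.Walk.length_reverse, hq, hq', hdist]
  grind

lemma evenReachable_of_coloring_eq (hconn : G.Connected) (C : G.Coloring Bool) (h : C u = C v) :
    EvenReachable G u v := by
  obtain ⟨p⟩ := hconn.preconnected u v
  exact ⟨p, (C.even_length_iff_congr p).2 (by rw [h])⟩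

lemma evenReachable_of_not_colorable_two (hconn : G.Connected) (h : ¬ G.Colorable 2) (u v : V) :
    EvenReachable G u v := by
  rw [SimpleGraph.two_colorable_iff_forall_loop_even] at h
  push Not at h
  obtain ⟨x, c, hc⟩ := h
  obtain ⟨p⟩ := hconn.preconnected u v
  obtain ⟨q⟩ := hconn.preconnected u x
  by_cases hp : Even p.length
  · exact ⟨p, hp⟩
  · refine ⟨((q.append c).append q.reverse).append p, ?_⟩
    simp only [SimpleGraph.Walk.length_append, SimpleGraph.Walk.length_reverse]
    grind

lemma exists_adj_dist_eq (hconn : G.Connected) {i : ℕ} (h : G.dist u v = i + 1) :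
    ∃ w, G.Adj w v ∧ G.dist u w = i := by
  obtain ⟨p, hp⟩ := hconn.exists_walk_length_eq_dist v u
  cases p with
  | nil => simp at h
  | @cons _ w _ hvw q =>
    have hq := G.dist_le q
    have hstep := hvw.diff_dist_adj (u := u)
    rw [SimpleGraph.Walk.length_cons] at hp
    rw [SimpleGraph.dist_comm] at hp hq
    exact ⟨w, hvw.symm, by omega⟩

end Walks

section Spheres

variable {V : Type*} [Fintype V] [DecidableEq V] {G : SimpleGraph V}

@[simp]
lemma mem_sphere {u v : V} {i : ℕ} : v ∈ sphere G u i ↔ G.dist u v = i := by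
  simp [sphere]

variable [DecidableRel G.Adj]

lemma dist_of_mem_sphere_inter_neighborFinset {u v w : V} {i : ℕ}
    (hw : w ∈ sphere G u i ∩ G.neighborFinset v) :
    i = G.dist u v - 1 ∨ i = G.dist u v ∨ i = G.dist u v + 1 := by
  rw [mem_inter, mem_sphere, SimpleGraph.mem_neighborFinset] at hw
  have := hw.2.diff_dist_adj (u := u)
  omega

lemma sum_neighborFinset_eq_sum_sphere_of_eq_zero {M : Type*} [AddCommMonoid M] (u v : V) (n : ℕ)
    (f : V → M) (hf : ∀ w, G.Adj v w → n ≤ G.dist u w → f w = 0) :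
    ∑ w ∈ G.neighborFinset v, f w
      = ∑ i ∈ range n, ∑ w ∈ sphere G u i ∩ G.neighborFinset v, f w := by
  simp_rw [sphere, filter_inter, univ_inter, sum_filter]
  rw [sum_comm]
  refine sum_congr rfl fun w hw => ?_
  rw [SimpleGraph.mem_neighborFinset] at hw
  simpa using hf w hw

lemma sum_neighborFinset_eq_sum_sphere {M : Type*} [AddCommMonoid M] (u v : V) (f : V → M) :
    ∑ w ∈ G.neighborFinset v, f w
      = ∑ i ∈ range (G.dist u v + 2), ∑ w ∈ sphere G u i ∩ G.neighborFinset v, f w := by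
  refine sum_neighborFinset_eq_sum_sphere_of_eq_zero u v _ f fun w hvw hw => ?_
  have := hvw.diff_dist_adj (u := u)
  omega

lemma degree_eq_sum_card_sphere_inter (u v : V) :
    G.degree v = ∑ i ∈ range (G.dist u v + 2), #(sphere G u i ∩ G.neighborFinset v) := by
  simp only [← SimpleGraph.card_neighborFinset_eq_degree, card_eq_sum_ones]
  exact sum_neighborFinset_eq_sum_sphere u v _

/-- The intersection numbers around `u` and around `u'` agree wherever both are defined: they depend
only on the distance to the base vertex. Taking all radii `i` is the same as taking the three radii
of `c`, `a` and `b`, as the other intersections are empty. -/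
def SameIntersectionNumbers (G : SimpleGraph V) [DecidableRel G.Adj] (u u' : V) : Prop :=
  ∀ v v', G.dist u v = G.dist u' v' → ∀ i,
    #(sphere G u i ∩ G.neighborFinset v) = #(sphere G u' i ∩ G.neighborFinset v')

/-- `G` is distance-regular around `u`: the distance partition of `u` is equitable. -/
def IsDistRegularAround (G : SimpleGraph V) [DecidableRel G.Adj] (u : V) : Prop :=
  SameIntersectionNumbers G u u

lemma SameIntersectionNumbers.degree_eq {u u' v v' : V} (h : SameIntersectionNumbers G u u')
    (hdist : G.dist u v = G.dist u' v') : G.degree v = G.degree v' := by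
  rw [degree_eq_sum_card_sphere_inter u, degree_eq_sum_card_sphere_inter u', hdist]
  exact sum_congr rfl fun i _ => h v v' hdist i

lemma IsDistRegularAround.degree_eq_of_adj {u v v' : V} (h : IsDistRegularAround G u)
    (hv : G.Adj u v) (hv' : G.Adj u v') : G.degree v = G.degree v' :=
  h.degree_eq ((SimpleGraph.dist_eq_one_iff_adj.2 hv).trans
    (SimpleGraph.dist_eq_one_iff_adj.2 hv').symm)

end Spheres

section WalkCounts

variable {V : Type*} [Fintype V] [DecidableEq V] {G : SimpleGraph V} [DecidableRel G.Adj]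
  {u u' v v' w : V}

lemma adjMatrix_pow_pos_iff {n : ℕ} :
    0 < (G.adjMatrix ℕ ^ n) u v ↔ ∃ p : G.Walk u v, p.length = n := by
  rw [SimpleGraph.adjMatrix_pow_apply_eq_card_walk, Nat.cast_id, Fintype.card_pos_iff]
  exact nonempty_subtype

lemma adjMatrix_pow_dist_pos (hconn : G.Connected) (u v : V) :
    0 < (G.adjMatrix ℕ ^ G.dist u v) u v :=
  adjMatrix_pow_pos_iff.2 (hconn.exists_walk_length_eq_dist u v)

lemma adjMatrix_pow_eq_zero_of_lt_dist {n : ℕ} (h : n < G.dist u v) :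
    (G.adjMatrix ℕ ^ n) u v = 0 := by
  by_contra hne
  obtain ⟨p, hp⟩ := adjMatrix_pow_pos_iff.1 (Nat.pos_of_ne_zero hne)
  exact absurd (G.dist_le p) (by omega)

lemma adjMatrix_pow_succ_apply (n : ℕ) (u v : V) :
    (G.adjMatrix ℕ ^ (n + 1)) u v = ∑ w ∈ G.neighborFinset v, (G.adjMatrix ℕ ^ n) u w := by
  rw [pow_succ, SimpleGraph.mul_adjMatrix_apply]

lemma adjMatrix_pow_succ_apply_eq_sum_sphere (n : ℕ) (u v : V) :
    (G.adjMatrix ℕ ^ (n + 1)) u v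
      = ∑ i ∈ range (n + 1), ∑ w ∈ sphere G u i ∩ G.neighborFinset v, (G.adjMatrix ℕ ^ n) u w := by
  rw [adjMatrix_pow_succ_apply]
  exact sum_neighborFinset_eq_sum_sphere_of_eq_zero u v _ _ fun w _ hw =>
    adjMatrix_pow_eq_zero_of_lt_dist hw

lemma SameIntersectionNumbers.adjMatrix_pow_eq (hconn : G.Connected)
    (h : SameIntersectionNumbers G u u') (hdist : G.dist u v = G.dist u' v') (n : ℕ) :
    (G.adjMatrix ℕ ^ n) u v = (G.adjMatrix ℕ ^ n) u' v' := by
  induction n generalizing v v' with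
  | zero => simp only [pow_zero, one_apply, ← hconn.dist_eq_zero_iff, hdist]
  | succ n ih =>
    rw [adjMatrix_pow_succ_apply_eq_sum_sphere, adjMatrix_pow_succ_apply_eq_sum_sphere]
    refine sum_congr rfl fun i _ => sum_eq_sum_of_card_eq (h v v' hdist i) fun w hw w' hw' => ?_
    rw [mem_inter, mem_sphere] at hw hw'
    exact ih (hw.1.trans hw'.1.symm)

lemma IsDistRegularAround.adjMatrix_pow_eq_of_adj (hconn : G.Connected)
    (h : IsDistRegularAround G u) (hv : G.Adj u v) (hv' : G.Adj u v') (n : ℕ) :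
    (G.adjMatrix ℕ ^ n) u v = (G.adjMatrix ℕ ^ n) u v' :=
  h.adjMatrix_pow_eq hconn ((SimpleGraph.dist_eq_one_iff_adj.2 hv).trans
    (SimpleGraph.dist_eq_one_iff_adj.2 hv').symm) n

lemma IsDistRegularAround.adjMatrix_pow_succ_diag (hconn : G.Connected)
    (h : IsDistRegularAround G u) (huw : G.Adj u w) (n : ℕ) :
    (G.adjMatrix ℕ ^ (n + 1)) u u = G.degree u * (G.adjMatrix ℕ ^ n) u w := by
  rw [adjMatrix_pow_succ_apply, sum_eq_card_nsmul fun x hx =>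
    h.adjMatrix_pow_eq_of_adj hconn ((G.mem_neighborFinset u x).1 hx) huw n,
    SimpleGraph.card_neighborFinset_eq_degree, smul_eq_mul]

lemma adjMatrix_pow_diag_eq_of_adj_of_adj (hconn : G.Connected)
    (hreg : ∀ x, IsDistRegularAround G x) (hu : G.Adj w u) (hu' : G.Adj w u') (n : ℕ) :
    (G.adjMatrix ℕ ^ n) u u = (G.adjMatrix ℕ ^ n) u' u' := by
  cases n with
  | zero => simp only [pow_zero, one_apply_eq]
  | succ n =>
    have hsymm := G.isSymm_adjMatrix (α := ℕ) |>.pow n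
    rw [(hreg u).adjMatrix_pow_succ_diag hconn hu.symm,
      (hreg u').adjMatrix_pow_succ_diag hconn hu'.symm, (hreg w).degree_eq_of_adj hu hu',
      hsymm.apply w u, hsymm.apply w u', (hreg w).adjMatrix_pow_eq_of_adj hconn hu hu']

end WalkCounts

section IntersectionNumbers

variable {V : Type*} [Fintype V] [DecidableEq V] {G : SimpleGraph V} [DecidableRel G.Adj]
  {u u' v v' : V} {i : ℕ}

/-- At distance `i`, the number of walks of each length from the base vertex is the same for the
base vertices `u` and `u'`. -/
def SameWalkCountsAt (G : SimpleGraph V) [DecidableRel G.Adj] (u u' : V) (i : ℕ) : Prop :=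
  ∀ v v', G.dist u v = i → G.dist u' v' = i → ∀ n,
    (G.adjMatrix ℕ ^ n) u v = (G.adjMatrix ℕ ^ n) u' v'

lemma SameWalkCountsAt.sum_sphere_inter_eq (h : SameWalkCountsAt G u u' i)
    (hcard : #(sphere G u i ∩ G.neighborFinset v) = #(sphere G u' i ∩ G.neighborFinset v'))
    (n : ℕ) :
    ∑ w ∈ sphere G u i ∩ G.neighborFinset v, (G.adjMatrix ℕ ^ n) u w
      = ∑ w ∈ sphere G u' i ∩ G.neighborFinset v', (G.adjMatrix ℕ ^ n) u' w :=
  sum_eq_sum_of_card_eq hcard fun w hw w' hw' =>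
    h w w' (mem_sphere.1 (mem_inter.1 hw).1) (mem_sphere.1 (mem_inter.1 hw').1) n

-- The walks of length `j + 1` from `u` to `v` see the neighbours of `v` in the spheres of radius at
-- most `j`, so these numbers are found one radius at a time.
lemma card_sphere_inter_eq_of_sameWalkCountsAt_of_le (hconn : G.Connected)
    (hwalk : ∀ k ≤ i, SameWalkCountsAt G u u' k) (hv : G.dist u v = i) (hv' : G.dist u' v' = i)
    {j : ℕ} (hj : j ≤ i) :
    #(sphere G u j ∩ G.neighborFinset v) = #(sphere G u' j ∩ G.neighborFinset v') := by
  induction j using Nat.strong_induction_on with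
  | _ j ih =>
    have hlower : ∑ k ∈ range j, ∑ w ∈ sphere G u k ∩ G.neighborFinset v, (G.adjMatrix ℕ ^ j) u w
        = ∑ k ∈ range j, ∑ w ∈ sphere G u' k ∩ G.neighborFinset v', (G.adjMatrix ℕ ^ j) u' w := by
      refine sum_congr rfl fun k hk => ?_
      have hkj := mem_range.1 hk
      exact (hwalk k (by omega)).sum_sphere_inter_eq (ih k hkj (by omega)) j
    have htotal := hwalk i le_rfl v v' hv hv' (j + 1)
    rw [adjMatrix_pow_succ_apply_eq_sum_sphere, adjMatrix_pow_succ_apply_eq_sum_sphere,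
      sum_range_succ, sum_range_succ, hlower, add_right_inj] at htotal
    have hpos : ∀ x y, ∀ w ∈ sphere G x j ∩ G.neighborFinset y, 0 < (G.adjMatrix ℕ ^ j) x w := by
      intro x y w hw
      rw [← mem_sphere.1 (mem_inter.1 hw).1]
      exact adjMatrix_pow_dist_pos hconn x w
    refine card_eq_card_of_sum_eq (hpos u v) (hpos u' v') (fun w hw w' hw' => ?_) htotal
    exact hwalk j hj w w' (mem_sphere.1 (mem_inter.1 hw).1) (mem_sphere.1 (mem_inter.1 hw').1) j

lemma card_sphere_inter_eq_of_sameWalkCountsAt (hconn : G.Connected)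
    (hwalk : ∀ k ≤ i, SameWalkCountsAt G u u' k) (hv : G.dist u v = i) (hv' : G.dist u' v' = i)
    (hdeg : G.degree v = G.degree v') (j : ℕ) :
    #(sphere G u j ∩ G.neighborFinset v) = #(sphere G u' j ∩ G.neighborFinset v') := by
  have hle : ∀ k ≤ i,
      #(sphere G u k ∩ G.neighborFinset v) = #(sphere G u' k ∩ G.neighborFinset v') := fun k hk =>
    card_sphere_inter_eq_of_sameWalkCountsAt_of_le hconn hwalk hv hv' hk
  obtain hj | rfl | hj := lt_trichotomy j (i + 1)
  · exact hle j (by omega)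
  · rw [degree_eq_sum_card_sphere_inter u, degree_eq_sum_card_sphere_inter u', hv, hv',
      sum_range_succ, sum_range_succ _ (i + 1),
      sum_congr rfl fun k hk => hle k (by have := mem_range.1 hk; omega)] at hdeg
    exact add_left_cancel hdeg
  · have hempty : ∀ x y, G.dist x y = i → sphere G x j ∩ G.neighborFinset y = ∅ := by
      refine fun x y hxy => eq_empty_of_forall_notMem fun w hw => ?_
      have := dist_of_mem_sphere_inter_neighborFinset hw
      omega
    rw [hempty u v hv, hempty u' v' hv']

-- Let `x` be a neighbour of `v` at distance `i`. Sort the walks of length `n + 1` from `u` to `x`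
-- by their last vertex before `x`: only the vertices at distance `i + 1` are not covered by
-- `hwalk`, and each of these is reached by as many walks as `v`.
lemma SameWalkCountsAt.succ (hconn : G.Connected) (hu : IsDistRegularAround G u)
    (hu' : IsDistRegularAround G u')
    (hdeg : ∀ v v', G.dist u v = G.dist u' v' → G.degree v = G.degree v')
    (hwalk : ∀ k ≤ i, SameWalkCountsAt G u u' k) : SameWalkCountsAt G u u' (i + 1) := by
  intro v v' hv hv' n
  obtain ⟨x, -, hx⟩ := exists_adj_dist_eq hconn hv
  obtain ⟨x', hxv', hx'⟩ := exists_adj_dist_eq hconn hv'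
  have hcard := card_sphere_inter_eq_of_sameWalkCountsAt hconn hwalk hx hx'
    (hdeg x x' (hx.trans hx'.symm))
  have hlower :
      ∑ k ∈ range (i + 1), ∑ w ∈ sphere G u k ∩ G.neighborFinset x, (G.adjMatrix ℕ ^ n) u w
        = ∑ k ∈ range (i + 1), ∑ w ∈ sphere G u' k ∩ G.neighborFinset x',
            (G.adjMatrix ℕ ^ n) u' w :=
    sum_congr rfl fun k hk =>
      (hwalk k (Nat.lt_succ_iff.1 (mem_range.1 hk))).sum_sphere_inter_eq (hcard k) n
  have htop : ∀ y z z', IsDistRegularAround G y → G.dist y z' = i + 1 →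
      ∑ w ∈ sphere G y (i + 1) ∩ G.neighborFinset z, (G.adjMatrix ℕ ^ n) y w
        = #(sphere G y (i + 1) ∩ G.neighborFinset z) * (G.adjMatrix ℕ ^ n) y z' := by
    intro y z z' hy hz'
    refine sum_eq_card_nsmul fun w hw => hy.adjMatrix_pow_eq hconn ?_ n
    exact (mem_sphere.1 (mem_inter.1 hw).1).trans hz'.symm
  have htotal := hwalk i le_rfl x x' hx hx' (n + 1)
  rw [adjMatrix_pow_succ_apply, adjMatrix_pow_succ_apply, sum_neighborFinset_eq_sum_sphere u,
    sum_neighborFinset_eq_sum_sphere u', hx, hx', sum_range_succ, sum_range_succ _ (i + 1),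
    hlower, add_right_inj, htop u x v hu hv, htop u' x' v' hu' hv', hcard] at htotal
  refine Nat.eq_of_mul_eq_mul_left (card_pos.2 ⟨v', ?_⟩) htotal
  simpa using ⟨hv', hxv'⟩

lemma sameIntersectionNumbers_of_adjMatrix_pow_diag_eq (hconn : G.Connected)
    (hu : IsDistRegularAround G u) (hu' : IsDistRegularAround G u')
    (hdeg : ∀ v v', G.dist u v = G.dist u' v' → G.degree v = G.degree v')
    (hdiag : ∀ n, (G.adjMatrix ℕ ^ n) u u = (G.adjMatrix ℕ ^ n) u' u') :
    SameIntersectionNumbers G u u' := by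
  have hwalk : ∀ i, SameWalkCountsAt G u u' i := by
    intro i
    induction i using Nat.strong_induction_on with
    | _ i ih =>
      cases i with
      | zero =>
        intro v v' hv hv' n
        rw [← hconn.dist_eq_zero_iff.1 hv, ← hconn.dist_eq_zero_iff.1 hv', hdiag]
      | succ i => exact .succ hconn hu hu' hdeg fun k hk => ih k (Nat.lt_succ_of_le hk)
  exact fun v v' hdist => card_sphere_inter_eq_of_sameWalkCountsAt hconn (fun k _ => hwalk k)
    hdist rfl (hdeg v v' hdist)

end IntersectionNumbers

section DistanceRegularised

variable {V : Type*} [Fintype V] [DecidableEq V] {G : SimpleGraph V} [DecidableRel G.Adj]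

lemma EvenReachable.sameIntersectionNumbers (hconn : G.Connected)
    (hreg : ∀ x, IsDistRegularAround G x) {u u' : V} (h : EvenReachable G u u') :
    SameIntersectionNumbers G u u' := by
  refine sameIntersectionNumbers_of_adjMatrix_pow_diag_eq hconn (hreg u) (hreg u') ?_ ?_
  · intro v v' hdist
    exact (h.of_dist_eq hconn hdist).apply_eq fun x _ _ hy hz => (hreg x).degree_eq_of_adj hy hz
  · intro n
    exact h.apply_eq (f := fun x => (G.adjMatrix ℕ ^ n) x x) fun _ _ _ hy hz =>
      adjMatrix_pow_diag_eq_of_adj_of_adj hconn hreg hy hz n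

lemma exists_intersectionNumbers {S : Set V}
    (hS : ∀ u ∈ S, ∀ u' ∈ S, SameIntersectionNumbers G u u') :
    ∃ k : ℕ → ℕ → ℕ, ∀ u ∈ S, ∀ v i,
      #(sphere G u i ∩ G.neighborFinset v) = k (G.dist u v) i := by
  have hfactors : Function.FactorsThrough
      (fun (x : S × V) i => #(sphere G x.1 i ∩ G.neighborFinset x.2))
      (fun x : S × V => G.dist x.1 x.2) :=
    fun x y hxy => funext (hS x.1 x.1.2 y.1 y.1.2 x.2 y.2 hxy)
  obtain ⟨k, hk⟩ := (Function.factorsThrough_iff _).1 hfactors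
  exact ⟨k, fun u hu v => congrFun (congrFun hk (⟨u, hu⟩, v))⟩

/-- The theorem of Godsil and Shawe-Taylor on distance-regularised graphs. -/
theorem isDistRegular_or_isDistBiregular_of_isDistRegularAround (hconn : G.Connected)
    (hreg : ∀ u, IsDistRegularAround G u) : IsDistRegular G ∨ IsDistBiregular G := by
  by_cases hbip : G.Colorable 2
  · right
    let C : G.Coloring Bool := hbip.toColoring (by simp)
    have hclass (b : Bool) := exists_intersectionNumbers (G := G) (S := {u | C u = b})
      fun u hu u' hu' => (evenReachable_of_coloring_eq hconn C
        (hu.trans hu'.symm)).sameIntersectionNumbers hconn hreg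
    have hstable (b : Bool) : ∀ u ∈ univ.filter (C · = b), ∀ v ∈ univ.filter (C · = b),
        ¬ G.Adj u v := fun u hu v hv huv =>
      C.valid huv ((mem_filter_univ u).1 hu |>.trans ((mem_filter_univ v).1 hv).symm)
    obtain ⟨k₁, hk₁⟩ := hclass true
    obtain ⟨k₂, hk₂⟩ := hclass false
    refine ⟨univ.filter (C · = true), univ.filter (C · = false), ?_, ?_, hstable true,
      hstable false, fun n => k₁ n (n - 1), fun n => k₁ n n, fun n => k₁ n (n + 1),
      fun n => k₂ n (n - 1), fun n => k₂ n n, fun n => k₂ n (n + 1), ?_, ?_⟩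
    · ext u
      simp
    · exact disjoint_filter.2 fun u _ hu => by simp [hu]
    · intro u hu v
      have := hk₁ u ((mem_filter_univ u).1 hu) v
      exact ⟨this _, this _, this _⟩
    · intro u hu v
      have := hk₂ u ((mem_filter_univ u).1 hu) v
      exact ⟨this _, this _, this _⟩
  · left
    obtain ⟨k, hk⟩ := exists_intersectionNumbers (G := G) (S := Set.univ) fun u _ u' _ =>
      (evenReachable_of_not_colorable_two hconn hbip u u').sameIntersectionNumbers hconn hreg
    exact ⟨fun n => k n (n - 1), fun n => k n n, fun n => k n (n + 1), fun u v =>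
      ⟨hk u trivial v _, hk u trivial v _, hk u trivial v _⟩⟩

end DistanceRegularised

section Weights

variable {V : Type*} [Fintype V] [DecidableEq V] {G : SimpleGraph V} [DecidableRel G.Adj]
  {alpha : V → ℝ} {u v v' : V}

lemma IsPDRAround.sum_sphere_inter_div_eq (h : IsPDRAround G alpha u)
    (hdist : G.dist u v = G.dist u v') (i : ℕ) :
    (∑ w ∈ sphere G u i ∩ G.neighborFinset v, alpha w) / alpha v
      = (∑ w ∈ sphere G u i ∩ G.neighborFinset v', alpha w) / alpha v' := by
  obtain ⟨hc, ha, hb⟩ := h (G.dist u v) v v' rfl hdist.symm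
  simp only [one_div_mul_eq_div] at hc ha hb
  by_cases hi : i = G.dist u v - 1 ∨ i = G.dist u v ∨ i = G.dist u v + 1
  · obtain rfl | rfl | rfl := hi
    exacts [hc, ha, hb]
  · have hempty : ∀ x, G.dist u x = G.dist u v → sphere G u i ∩ G.neighborFinset x = ∅ :=
      fun x hx => eq_empty_of_forall_notMem fun w hw =>
        hi (hx ▸ dist_of_mem_sphere_inter_neighborFinset hw)
    simp only [hempty v rfl, hempty v' hdist.symm, sum_empty, zero_div]

lemma IsPDRAround.weight_eq_of_adj (hconn : G.Connected) (hpos : ∀ v, 0 < alpha v)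
    (h : IsPDRAround G alpha u) (hv : G.Adj u v) (hv' : G.Adj u v') : alpha v = alpha v' := by
  have hsingle : ∀ x, G.Adj u x → sphere G u 0 ∩ G.neighborFinset x = {u} := by
    intro x hx
    ext w
    simp only [mem_inter, mem_sphere, hconn.dist_eq_zero_iff, SimpleGraph.mem_neighborFinset,
      mem_singleton]
    exact ⟨fun hw => hw.1.symm, fun hw => ⟨hw.symm, hw ▸ hx.symm⟩⟩
  have hdist := (SimpleGraph.dist_eq_one_iff_adj.2 hv).trans
    (SimpleGraph.dist_eq_one_iff_adj.2 hv').symm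
  have hratio := h.sum_sphere_inter_div_eq hdist 0
  rw [hsingle v hv, hsingle v' hv', sum_singleton,
    div_eq_div_iff (hpos v).ne' (hpos v').ne'] at hratio
  exact (mul_left_cancel₀ (hpos u).ne' hratio).symm

lemma isDistRegularAround_of_isPDRAround (hconn : G.Connected) (hpos : ∀ v, 0 < alpha v)
    (hpdr : ∀ x, IsPDRAround G alpha x) (u : V) : IsDistRegularAround G u := by
  intro v v' hdist i
  have hweight : ∀ {x y}, EvenReachable G x y → alpha x = alpha y := fun hxy =>
    hxy.apply_eq fun z _ _ hx hy => (hpdr z).weight_eq_of_adj hconn hpos hx hy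
  have hvv' := (EvenReachable.refl u).of_dist_eq hconn hdist
  have hsum := (hpdr u).sum_sphere_inter_div_eq hdist i
  rw [hweight hvv', div_left_inj' (hpos v').ne'] at hsum
  refine card_eq_card_of_sum_eq (fun w _ => hpos w) (fun w _ => hpos w) ?_ hsum
  intro w hw w' hw'
  rw [mem_inter, SimpleGraph.mem_neighborFinset, ← SimpleGraph.dist_eq_one_iff_adj] at hw hw'
  exact hweight (hvv'.of_dist_eq hconn (hw.2.trans hw'.2.symm))

end Weights

theorem stmt_10_general {V : Type*} [Fintype V] [DecidableEq V] {G : SimpleGraph V}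
    [DecidableRel G.Adj] (hconn : G.Connected) {alpha : V → ℝ} (hapos : ∀ v, 0 < alpha v)
    (hpdr : ∀ u, IsPDRAround G alpha u) : IsDistRegular G ∨ IsDistBiregular G :=
  isDistRegular_or_isDistBiregular_of_isDistRegularAround hconn
    (isDistRegularAround_of_isPDRAround hconn hapos hpdr)

/-- Theorem 2.3: every connected graph that is pseudo-distance-regular around each of
its vertices is either distance-regular or distance-biregular. -/
theorem stmt_10 {V : Type*} [Fintype V] [DecidableEq V]
    (G : SimpleGraph V) [DecidableRel G.Adj] (hconn : G.Connected)
    (lam0 : ℝ) (alpha : V → ℝ) (hapos : ∀ v, 0 < alpha v)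
    (haeig : G.adjMatrix ℝ *ᵥ alpha = lam0 • alpha)
    (hanorm : ∑ v : V, alpha v ^ 2 = (Fintype.card V : ℝ))
    (hpdr : ∀ u : V, IsPDRAround G alpha u) :
    IsDistRegular G ∨ IsDistBiregular G :=
  stmt_10_general hconn hapos hpdr
end
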